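/- Let A be a unital Banach algebra with identity 1 of norm 1. If a ∈ A satisfies ‖1 − t·a‖ ≤ 1 and ‖1 + s·a‖ ≤ 1 for some s, t > 0, then a = 0. Consequently the cone 𝔠_A = ℝ₊·{a : ‖1 − a‖ ≤ 1} is a proper cone, i.e. 𝔠_A ∩ (−𝔠_A) = {0}. -/

import Mathlib

/-- The cone `ℝ₊ • 𝔉_A` where `𝔉_A = {a : ‖1 - a‖ ≤ 1}`. -/
def cA (A : Type*) [NormedRing A] [NormedAlgebra ℝ A] : Set A :=
  {x : A | ∃ r : ℝ, 0 ≤ r ∧ ∃ b : A, ‖(1 : A) - b‖ ≤ 1 ∧ x = r • b}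

/-!
Suppose `u = 1 + x` and `v = 1 - x` both have norm at most one. Since `u + v = 2` and
`u - v = 2x`, we have `2 ^ (N + 1) x = (u + v) ^ N (u - v)`. Expanding the power and summing by
parts, the norm of the right-hand side is at most the total variation of the `N`-th row of
Pascal's triangle, extended by zero. That row is unimodal, so its variation is twice the middle
coefficient, which is `o(2 ^ N)`; hence `x = 0`. A convexity argument upgrades this to
extremality of `1` in the unit ball, and `1` lies in the open segment from `1 - t a` to `1 + s a`.
-/

open Finset

theorem sum_range_abs_sub_of_monotoneOn_of_antitoneOn {α : Type*} [AddCommGroup α] [LinearOrder α]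
    [IsOrderedAddMonoid α] {c : ℕ → α} {m n : ℕ} (hmn : m ≤ n)
    (hmono : MonotoneOn c (Set.Iic m)) (hanti : AntitoneOn c (Set.Ici m)) :
    ∑ k ∈ range n, |c (k + 1) - c k| = (c m - c 0) + (c m - c n) := by
  have increasing_part : ∑ k ∈ range m, |c (k + 1) - c k| = c m - c 0 := by
    rw [← sum_range_sub]
    refine sum_congr rfl fun k hk => abs_of_nonneg (sub_nonneg.2 ?_)
    have hk : k + 1 ≤ m := mem_range.1 hk
    exact hmono (k.le_succ.trans hk) hk k.le_succ
  have decreasing_part : ∑ k ∈ Ico m n, |c (k + 1) - c k| = c m - c n := by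
    rw [← neg_sub, ← sum_Ico_sub c hmn, ← sum_neg_distrib]
    refine sum_congr rfl fun k hk => abs_of_nonpos (sub_nonpos.2 ?_)
    have hk : m ≤ k := (mem_Ico.1 hk).1
    exact hanti hk (hk.trans k.le_succ) k.le_succ
  rw [← sum_range_add_sum_Ico _ hmn, increasing_part, decreasing_part]

theorem norm_sum_range_smul_sub_le {𝕜 E : Type*} [SeminormedRing 𝕜] [SeminormedAddCommGroup E]
    [Module 𝕜 E] [IsBoundedSMul 𝕜 E] (c : ℕ → 𝕜) {w : ℕ → E} {n : ℕ} (hw : ∀ k ≤ n, ‖w k‖ ≤ 1) :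
    ‖∑ k ∈ range n, c k • (w (k + 1) - w k)‖ ≤
      ‖c 0‖ + ∑ k ∈ range n, ‖c (k + 1) - c k‖ + ‖c n‖ := by
  have norm_smul_le_left (a : 𝕜) {k : ℕ} (hk : k ≤ n) : ‖a • w k‖ ≤ ‖a‖ :=
    (norm_smul_le _ _).trans (mul_le_of_le_one_right (norm_nonneg _) (hw k hk))
  have by_parts : ∑ k ∈ range n, c k • (w (k + 1) - w k) =
      c n • w n - c 0 • w 0 - ∑ k ∈ range n, (c (k + 1) - c k) • w (k + 1) := by
    rw [← sum_range_sub (fun k => c k • w k), ← sum_sub_distrib]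
    exact sum_congr rfl fun k _ => by rw [smul_sub, sub_smul]; abel
  calc ‖∑ k ∈ range n, c k • (w (k + 1) - w k)‖
      ≤ ‖c n • w n‖ + ‖c 0 • w 0‖ + ‖∑ k ∈ range n, (c (k + 1) - c k) • w (k + 1)‖ := by
        rw [by_parts]
        exact (norm_sub_le _ _).trans (add_le_add_left (norm_sub_le _ _) _)
    _ ≤ ‖c n‖ + ‖c 0‖ + ∑ k ∈ range n, ‖c (k + 1) - c k‖ := by
        gcongr
        · exact norm_smul_le_left _ le_rfl
        · exact norm_smul_le_left _ n.zero_le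
        · exact norm_sum_le_of_le _ fun k hk => norm_smul_le_left _ (mem_range.1 hk)
    _ = ‖c 0‖ + ∑ k ∈ range n, ‖c (k + 1) - c k‖ + ‖c n‖ := by ring

theorem monotoneOn_choose_Iic_half (n : ℕ) : MonotoneOn n.choose (Set.Iic (n / 2)) :=
  monotoneOn_of_le_succ Set.ordConnected_Iic fun _ _ _ hk =>
    Nat.choose_le_succ_of_lt_half_left (Nat.lt_of_succ_le hk)

theorem antitoneOn_choose_Ici_half (n : ℕ) : AntitoneOn n.choose (Set.Ici (n / 2)) := by
  refine antitoneOn_of_succ_le Set.ordConnected_Ici fun k _ hk _ => ?_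
  have hk : n / 2 ≤ k := hk
  refine Nat.le_of_mul_le_mul_right (c := k + 1) ?_ k.succ_pos
  calc n.choose (k + 1) * (k + 1) = n.choose k * (n - k) := Nat.choose_succ_right_eq n k
    _ ≤ n.choose k * (k + 1) := by gcongr; omega

theorem sum_range_abs_choose_succ_sub_choose (n : ℕ) :
    ∑ k ∈ range (n + 1), |(n.choose (k + 1) : ℝ) - n.choose k| = 2 * n.choose (n / 2) - 1 := by
  have hcast : Monotone (Nat.cast : ℕ → ℝ) := Nat.mono_cast
  rw [sum_range_abs_sub_of_monotoneOn_of_antitoneOn (c := fun k => (n.choose k : ℝ))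
    (m := n / 2) (by omega) (hcast.comp_monotoneOn (monotoneOn_choose_Iic_half n))
    (hcast.comp_antitoneOn (antitoneOn_choose_Ici_half n))]
  simp only [Nat.choose_zero_right, Nat.choose_succ_self, Nat.cast_one, Nat.cast_zero]
  ring

theorem two_mul_add_one_mul_centralBinom_sq_le (n : ℕ) :
    (2 * n + 1) * n.centralBinom ^ 2 ≤ (4 ^ n) ^ 2 := by
  induction n with
  | zero => simp
  | succ n ih =>
    refine le_of_mul_le_mul_left ?_ (pow_pos n.succ_pos 2)
    calc (n + 1) ^ 2 * ((2 * (n + 1) + 1) * (n + 1).centralBinom ^ 2)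
        = (2 * n + 3) * ((n + 1) * (n + 1).centralBinom) ^ 2 := by ring
      _ = 4 * ((2 * n + 1) * (2 * n + 3)) * ((2 * n + 1) * n.centralBinom ^ 2) := by
          rw [Nat.succ_mul_centralBinom_succ]; ring
      _ ≤ 4 * (2 * (n + 1)) ^ 2 * (4 ^ n) ^ 2 := by
          gcongr
          linarith
      _ = (n + 1) ^ 2 * (4 ^ (n + 1)) ^ 2 := by ring

section SeminormedRing

variable {A : Type*} [SeminormedRing A] {u v : A}

theorem norm_pow_mul_pow_le_one (hu : ‖u‖ ≤ 1) (hv : ‖v‖ ≤ 1) {i j : ℕ} (hij : 0 < i + j) :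
    ‖u ^ i * v ^ j‖ ≤ 1 := by
  have norm_pow_le_one {z : A} (hz : ‖z‖ ≤ 1) {n : ℕ} (hn : 0 < n) : ‖z ^ n‖ ≤ 1 :=
    (norm_pow_le' z hn).trans (pow_le_one₀ (norm_nonneg z) hz)
  rcases i.eq_zero_or_pos with rfl | hi
  · simpa using norm_pow_le_one hv (by omega)
  rcases j.eq_zero_or_pos with rfl | hj
  · simpa using norm_pow_le_one hu hi
  exact (norm_mul_le _ _).trans
    (mul_le_one₀ (norm_pow_le_one hu hi) (norm_nonneg _) (norm_pow_le_one hv hj))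

variable [NormedAlgebra ℝ A]

theorem add_pow_mul_sub_eq_sum_choose_smul (huv : Commute u v) (n : ℕ) :
    (u + v) ^ n * (u - v) = ∑ k ∈ range (n + 1),
      (n.choose k : ℝ) • (u ^ (k + 1) * v ^ (n + 1 - (k + 1)) - u ^ k * v ^ (n + 1 - k)) := by
  rw [huv.add_pow, sum_mul]
  refine sum_congr rfl fun k hk => ?_
  have hk : k ≤ n := Nat.lt_succ_iff.1 (mem_range.1 hk)
  rw [Nat.cast_smul_eq_nsmul, nsmul_eq_mul, Nat.add_sub_add_right, Nat.sub_add_comm hk,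
    ← (Nat.cast_commute (n.choose k) _).eq, mul_assoc, mul_sub, mul_assoc (u ^ k),
    mul_assoc (u ^ k), ← (huv.pow_right _).eq, ← mul_assoc, ← pow_succ, ← pow_succ]

theorem norm_add_pow_mul_sub_le (huv : Commute u v) (hu : ‖u‖ ≤ 1) (hv : ‖v‖ ≤ 1) (n : ℕ) :
    ‖(u + v) ^ n * (u - v)‖ ≤ 2 * n.choose (n / 2) := by
  have hw : ∀ k ≤ n + 1, ‖u ^ k * v ^ (n + 1 - k)‖ ≤ 1 := fun k _ =>
    norm_pow_mul_pow_le_one hu hv (by omega)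
  calc ‖(u + v) ^ n * (u - v)‖
      ≤ ‖(n.choose 0 : ℝ)‖ + ∑ k ∈ range (n + 1), ‖(n.choose (k + 1) : ℝ) - n.choose k‖ +
          ‖(n.choose (n + 1) : ℝ)‖ := by
        rw [add_pow_mul_sub_eq_sum_choose_smul huv]
        exact norm_sum_range_smul_sub_le (fun k => (n.choose k : ℝ)) hw
    _ = 2 * n.choose (n / 2) := by
        simp [Real.norm_eq_abs, sum_range_abs_choose_succ_sub_choose]

theorem two_mul_add_one_mul_norm_sq_le_one {x : A} (hadd : ‖1 + x‖ ≤ 1) (hsub : ‖1 - x‖ ≤ 1)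
    (n : ℕ) : (2 * n + 1) * ‖x‖ ^ 2 ≤ 1 := by
  have hcomm : Commute (1 + x) (1 - x) :=
    (Commute.one_left _).add_left ((Commute.one_right x).sub_right (Commute.refl x))
  have hpow : (1 + x + (1 - x)) ^ (2 * n) * (1 + x - (1 - x)) = (2 * 4 ^ n : ℝ) • x := by
    rw [show 1 + x + (1 - x) = algebraMap ℝ A 2 by rw [map_ofNat, ← one_add_one_eq_two]; abel,
      show 1 + x - (1 - x) = (2 : ℝ) • x by rw [two_smul]; abel,
      ← map_pow, ← Algebra.smul_def, smul_smul, pow_mul]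
    norm_num [mul_comm]
  have hcentral : 4 ^ n * ‖x‖ ≤ n.centralBinom := by
    have h := norm_add_pow_mul_sub_le hcomm hadd hsub (2 * n)
    rw [hpow, norm_smul, Real.norm_of_nonneg (by positivity), Nat.mul_div_cancel_left n two_pos,
      ← Nat.centralBinom_eq_two_mul_choose] at h
    linarith
  have hfour : (0 : ℝ) < (4 ^ n) ^ 2 := by positivity
  refine le_of_mul_le_mul_left ?_ hfour
  calc (4 ^ n) ^ 2 * ((2 * n + 1) * ‖x‖ ^ 2) = (2 * n + 1) * (4 ^ n * ‖x‖) ^ 2 := by ring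
    _ ≤ (2 * n + 1) * (n.centralBinom : ℝ) ^ 2 := by gcongr
    _ ≤ (4 ^ n) ^ 2 * 1 := by
        rw [mul_one]; exact_mod_cast two_mul_add_one_mul_centralBinom_sq_le n

end SeminormedRing

theorem mem_extremePoints_of_forall_add_mem_sub_mem {𝕜 E : Type*} [Field 𝕜] [LinearOrder 𝕜]
    [IsStrictOrderedRing 𝕜] [AddCommGroup E] [Module 𝕜 E] {S : Set E} {x : E}
    (hS : Convex 𝕜 S) (hx : x ∈ S) (h : ∀ d, x + d ∈ S → x - d ∈ S → d = 0) :
    x ∈ S.extremePoints 𝕜 := by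
  refine mem_extremePoints_iff_left.2 ⟨hx, ?_⟩
  rintro y hy z hz ⟨a, b, ha, hb, hab, rfl⟩
  have hmin : 0 < min a b := lt_min ha hb
  have hmina : min a b ≤ a := min_le_left a b
  have hminb : min a b ≤ b := min_le_right a b
  have hadd : a • y + b • z + min a b • (y - z) ∈ S := by
    convert hS hy hz (a := a + min a b) (b := b - min a b) (by linarith) (by linarith)
      (by linarith) using 1
    module
  have hsub : a • y + b • z - min a b • (y - z) ∈ S := by
    convert hS hy hz (a := a - min a b) (b := b + min a b) (by linarith) (by linarith)
      (by linarith) using 1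
    module
  have hyz : y = z := sub_eq_zero.1 ((smul_eq_zero.1 (h _ hadd hsub)).resolve_left hmin.ne')
  rw [← hyz, ← add_smul, hab, one_smul]

section NormedAlgebra

variable {A : Type*} [NormedRing A] [NormedAlgebra ℝ A]

theorem eq_zero_of_norm_one_add_le_of_norm_one_sub_le {x : A} (hadd : ‖1 + x‖ ≤ 1)
    (hsub : ‖1 - x‖ ≤ 1) : x = 0 := by
  by_contra hx
  have hpos : 0 < ‖x‖ ^ 2 := pow_pos (norm_pos_iff.2 hx) 2
  obtain ⟨n, hn⟩ := exists_nat_gt (1 / ‖x‖ ^ 2)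
  rw [div_lt_iff₀ hpos] at hn
  nlinarith [two_mul_add_one_mul_norm_sq_le_one hadd hsub n]

theorem one_mem_extremePoints_closedBall (hone : ‖(1 : A)‖ ≤ 1) :
    (1 : A) ∈ (Metric.closedBall (0 : A) 1).extremePoints ℝ :=
  mem_extremePoints_of_forall_add_mem_sub_mem (convex_closedBall 0 1)
    (mem_closedBall_zero_iff.2 hone) fun _ hadd hsub =>
      eq_zero_of_norm_one_add_le_of_norm_one_sub_le
        (mem_closedBall_zero_iff.1 hadd) (mem_closedBall_zero_iff.1 hsub)

theorem eq_zero_of_norm_one_sub_smul_le_of_norm_one_add_smul_le {a : A} {s t : ℝ} (hs : 0 < s)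
    (ht : 0 < t) (hsub : ‖1 - t • a‖ ≤ 1) (hadd : ‖1 + s • a‖ ≤ 1) : a = 0 := by
  have hst : s + t ≠ 0 := (add_pos hs ht).ne'
  have hsegment : (1 : A) ∈ openSegment ℝ (1 - t • a) (1 + s • a) :=
    ⟨s / (s + t), t / (s + t), by positivity, by positivity, by field_simp, by
      match_scalars <;> field_simp; ring⟩
  rw [← mem_closedBall_zero_iff] at hsub hadd
  have hone : ‖(1 : A)‖ ≤ 1 := mem_closedBall_zero_iff.1
    ((convex_closedBall 0 1).openSegment_subset hsub hadd hsegment)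
  have hend : 1 - t • a = 1 := (one_mem_extremePoints_closedBall hone).2 hsub hadd hsegment
  exact (smul_eq_zero.1 (sub_eq_self.1 hend)).resolve_left ht.ne'

theorem zero_mem_cA : (0 : A) ∈ cA A :=
  ⟨0, le_rfl, 1, by simp, by simp⟩

theorem exists_pos_norm_one_sub_smul_le_of_mem_cA {x : A} (hx : x ∈ cA A) (hx0 : x ≠ 0) :
    ∃ t : ℝ, 0 < t ∧ ‖1 - t • x‖ ≤ 1 := by
  obtain ⟨r, hr, b, hb, rfl⟩ := hx
  have hr0 : r ≠ 0 := left_ne_zero_of_smul hx0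
  exact ⟨r⁻¹, inv_pos.2 (hr.lt_of_ne' hr0), by rwa [inv_smul_smul₀ hr0]⟩

theorem eq_zero_of_mem_cA_of_neg_mem_cA {x : A} (hx : x ∈ cA A) (hneg : -x ∈ cA A) : x = 0 := by
  by_contra hx0
  obtain ⟨t, ht, hsub⟩ := exists_pos_norm_one_sub_smul_le_of_mem_cA hx hx0
  obtain ⟨s, hs, hadd⟩ := exists_pos_norm_one_sub_smul_le_of_mem_cA hneg (neg_ne_zero.2 hx0)
  rw [smul_neg, sub_neg_eq_add] at hadd
  exact hx0 (eq_zero_of_norm_one_sub_smul_le_of_norm_one_add_smul_le hs ht hsub hadd)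

end NormedAlgebra

theorem stmt0_general (A : Type*) [NormedRing A] [NormedAlgebra ℝ A] :
    (∀ (a : A) (s t : ℝ), 0 < s → 0 < t →
      ‖(1 : A) - t • a‖ ≤ 1 → ‖(1 : A) + s • a‖ ≤ 1 → a = 0) ∧
    cA A ∩ {x : A | -x ∈ cA A} = {0} := by
  refine ⟨fun a s t => eq_zero_of_norm_one_sub_smul_le_of_norm_one_add_smul_le, ?_⟩
  refine Set.eq_singleton_iff_unique_mem.2 ⟨⟨zero_mem_cA, ?_⟩, ?_⟩
  · simpa using zero_mem_cA (A := A)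
  · exact fun x hx => eq_zero_of_mem_cA_of_neg_mem_cA hx.1 hx.2

/-- In a unital Banach algebra with identity of norm one, if `‖1 - t•a‖ ≤ 1` and
`‖1 + s•a‖ ≤ 1` for some `s, t > 0`, then `a = 0`; consequently `𝔠_A` is a proper cone. -/
theorem stmt0 (A : Type*) [NormedRing A] [CompleteSpace A] [NormOneClass A]
    [NormedAlgebra ℝ A] :
    (∀ (a : A) (s t : ℝ), 0 < s → 0 < t →
      ‖(1 : A) - t • a‖ ≤ 1 → ‖(1 : A) + s • a‖ ≤ 1 → a = 0) ∧
    cA A ∩ {x : A | -x ∈ cA A} = {0} :=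
  stmt0_general A
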